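/- The blob K-matrix K(u) := Id − (μ/(sinh(h) sinh(hα))) · (sinh(u − hα) sinh(u) · Id + sinh(hα) sinh(2u) · b) solves the boundary Yang–Baxter (reflection) equation: for all u, v ∈ ℂ, R_{ab}(u−v) K_a(u) R_{ba}(u+v) K_b(v) = K_b(v) R_{ab}(u+v) K_a(u) R_{ba}(u−v) as operators on ℂ²_a ⊗ ℂ²_b ⊗ V_α. -/

import Mathlib

noncomputable section

/-- The Verma module `V_α`: finitely supported complex sequences, basis `|n⟩`. -/
abbrev Verma : Type := ℕ →₀ ℂ

/-- The basis vector `|n⟩`. -/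
noncomputable def ket (n : ℕ) : Verma := Finsupp.single n 1

/-- The linear operator on `Verma` determined by its values on the basis vectors. -/
noncomputable def ladderOp (t : ℕ → Verma) : Module.End ℂ Verma :=
  Finsupp.lsum ℂ fun n => LinearMap.toSpanSingleton ℂ Verma (t n)

/-- The q-deformed number `[x]_q` with `q = e^h`. -/
noncomputable def qnum (h x : ℂ) : ℂ :=
  (Complex.exp (h * x) - Complex.exp (-(h * x))) / (Complex.exp h - Complex.exp (-h))

/-- `E |n⟩ = [n]_q [α−n]_q |n−1⟩`, `E |0⟩ = 0`. -/
noncomputable def Eop (h α : ℂ) : Module.End ℂ Verma :=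
  ladderOp fun n => if n = 0 then 0 else (qnum h n * qnum h (α - n)) • ket (n - 1)

/-- `F |n⟩ = |n+1⟩`. -/
noncomputable def Fop : Module.End ℂ Verma := ladderOp fun n => ket (n + 1)

/-- `K |n⟩ = q^{α−1−2n} |n⟩`. -/
noncomputable def Kop (h α : ℂ) : Module.End ℂ Verma :=
  ladderOp fun n => Complex.exp (h * (α - 1 - 2 * n)) • ket n

/-- `K⁻¹ |n⟩ = q^{−(α−1−2n)} |n⟩`. -/
noncomputable def Kinv (h α : ℂ) : Module.End ℂ Verma :=
  ladderOp fun n => Complex.exp (-(h * (α - 1 - 2 * n))) • ket n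

/-- Operators on `V_α ⊗ ℂ²` as 2×2 matrices with entries in `End(V_α)`. -/
abbrev Op2 : Type := Matrix (Fin 2) (Fin 2) (Module.End ℂ Verma)

/-- The boundary projector `b` on `V_α ⊗ ℂ²`. -/
noncomputable def bPlus (h α : ℂ) : Op2 :=
  (Complex.exp (h * α) - Complex.exp (-(h * α)))⁻¹ •
    !![(-Complex.exp (-h)) • Kinv h α + Complex.exp (h * α) • 1,
        (Complex.exp h - Complex.exp (-h)) • Fop;
        (Complex.exp h * (Complex.exp h - Complex.exp (-h))) • (Kinv h α * Eop h α),
        Complex.exp h • Kinv h α - Complex.exp (-(h * α)) • 1]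

/-- The blob K-matrix `K(u)` on `V_α ⊗ ℂ²`. -/
noncomputable def Kblob (h α μ u : ℂ) : Op2 :=
  1 - (μ / (Complex.sinh h * Complex.sinh (h * α))) •
    ((Complex.sinh (u - h * α) * Complex.sinh u) • (1 : Op2)
      + (Complex.sinh (h * α) * Complex.sinh (2 * u)) • bPlus h α)

/-- The scalar trigonometric R-matrix on `ℂ² ⊗ ℂ²` (ordered basis ↑↑, ↑↓, ↓↑, ↓↓). -/
noncomputable def Rsc (h w : ℂ) : Matrix (Fin 2 × Fin 2) (Fin 2 × Fin 2) ℂ :=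
  Matrix.of fun p r =>
    if p = r then (if p.1 = p.2 then Complex.sinh (w + h) else Complex.sinh w)
    else if p = ((0 : Fin 2), (1 : Fin 2)) ∧ r = ((1 : Fin 2), (0 : Fin 2)) then
      Complex.sinh h * Complex.exp w
    else if p = ((1 : Fin 2), (0 : Fin 2)) ∧ r = ((0 : Fin 2), (1 : Fin 2)) then
      Complex.sinh h * Complex.exp (-w)
    else 0

/-- Operators on `ℂ²_a ⊗ ℂ²_b ⊗ V_α`, as matrices with entries in `End(V_α)` indexed by
pairs (state of `ℂ²_a`, state of `ℂ²_b`). -/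
abbrev Op4 : Type := Matrix (Fin 2 × Fin 2) (Fin 2 × Fin 2) (Module.End ℂ Verma)

/-- `R_{ab}(w)`: the R-matrix on the two `ℂ²` factors, identity on `V_α`. -/
noncomputable def Rab (h w : ℂ) : Op4 :=
  Matrix.of fun p r => Rsc h w p r • (1 : Module.End ℂ Verma)

/-- `R_{ba}(w) = P R(w) P`: the R-matrix with the two `ℂ²` factors swapped. -/
noncomputable def Rba (h w : ℂ) : Op4 :=
  Matrix.of fun p r => Rsc h w p.swap r.swap • (1 : Module.End ℂ Verma)

/-- `K_a(u)`: the K-matrix acting on `V_α` and `ℂ²_a`, identity on `ℂ²_b`. -/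
noncomputable def Ka (h α μ u : ℂ) : Op4 :=
  Matrix.of fun p r => if p.2 = r.2 then Kblob h α μ u p.1 r.1 else 0

/-- `K_b(v)`: the K-matrix acting on `V_α` and `ℂ²_b`, identity on `ℂ²_a`. -/
noncomputable def Kb (h α μ v : ℂ) : Op4 :=
  Matrix.of fun p r => if p.1 = r.1 then Kblob h α μ v p.2 r.2 else 0

lemma ladderOp_ket (t : ℕ → Verma) (n : ℕ) : ladderOp t (ket n) = t n := by
  simp [ladderOp, ket]

lemma end_ext {f g : Module.End ℂ Verma} (H : ∀ n, f (ket n) = g (ket n)) : f = g := by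
  apply Finsupp.lhom_ext'
  intro n
  apply LinearMap.ext_ring
  exact H n

lemma rel_FK (h α : ℂ) :
    Fop * Kinv h α = (Complex.exp (-h) ^ 2) • (Kinv h α * Fop) := by
  apply end_ext
  intro n
  simp only [Module.End.mul_apply, LinearMap.smul_apply, Fop, Kinv, ladderOp_ket, map_smul,
    smul_smul]
  congr 1
  rw [← Complex.exp_nat_mul, ← Complex.exp_add]
  congr 1
  push_cast
  ring

lemma rel_EK (h α : ℂ) :
    Eop h α * Kinv h α = (Complex.exp h ^ 2) • (Kinv h α * Eop h α) := by
  apply end_ext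
  intro n
  rcases n with _ | n
  · simp [Module.End.mul_apply, Eop, Kinv, ladderOp_ket]
  simp only [Module.End.mul_apply, LinearMap.smul_apply, Eop, Kinv, ladderOp_ket, map_smul,
    smul_smul, Nat.succ_ne_zero, if_false, Nat.add_sub_cancel]
  have e : Complex.exp (-(h * (α - 1 - 2 * ((n + 1 : ℕ) : ℂ)))) =
      Complex.exp h ^ 2 * Complex.exp (-(h * (α - 1 - 2 * (n : ℂ)))) := by
    rw [← Complex.exp_nat_mul, ← Complex.exp_add]
    congr 1
    push_cast
    ring
  rw [e]
  congr 1
  ring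

lemma exp_k (h α : ℂ) (n : ℕ) : Complex.exp (-(h * (α - 1 - 2 * (n : ℂ)))) =
    (Complex.exp (h * α))⁻¹ * Complex.exp h * Complex.exp (h * n) ^ 2 := by
  rw [← Complex.exp_nat_mul, ← Complex.exp_neg, ← Complex.exp_add, ← Complex.exp_add]
  congr 1
  push_cast
  ring

lemma qnum_prod (h α : ℂ) (hd : Complex.exp h - Complex.exp (-h) ≠ 0) (n : ℕ) :
    (Complex.exp h - Complex.exp (-h)) ^ 2 * (qnum h n * qnum h (α - n)) =
    (Complex.exp (h * n) - (Complex.exp (h * n))⁻¹) *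
    (Complex.exp (h * α) * (Complex.exp (h * n))⁻¹ -
      (Complex.exp (h * α))⁻¹ * Complex.exp (h * n)) := by
  have e1 : Complex.exp (h * (α - n)) = Complex.exp (h * α) * (Complex.exp (h * n))⁻¹ := by
    rw [← Complex.exp_neg, ← Complex.exp_add]
    congr 1
    ring
  have e2 : Complex.exp (-(h * (α - n))) = (Complex.exp (h * α))⁻¹ * Complex.exp (h * n) := by
    rw [← Complex.exp_neg, ← Complex.exp_add]
    congr 1
    ring
  unfold qnum
  rw [e1, e2, Complex.exp_neg (h * n)]
  field_simp

lemma exp_succ (h : ℂ) (n : ℕ) :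
    Complex.exp (h * ((n + 1 : ℕ) : ℂ)) = Complex.exp h * Complex.exp (h * n) := by
  rw [← Complex.exp_add]
  congr 1
  push_cast
  ring

lemma rel_FE (h α : ℂ) (hd : Complex.exp h - Complex.exp (-h) ≠ 0) :
    (Complex.exp h - Complex.exp (-h)) ^ 2 • (Fop * (Kinv h α * Eop h α)) =
      (Complex.exp (-h) ^ 2 * (Complex.exp (h * α) + Complex.exp (-(h * α)))) • Kinv h α
      - (Complex.exp (-h) ^ 3) • (Kinv h α * Kinv h α) - Complex.exp (-h) • 1 := by
  apply end_ext
  intro n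
  have hh := Complex.exp_ne_zero h
  have ha := Complex.exp_ne_zero (h * α)
  rcases n with _ | n
  · simp only [Module.End.mul_apply, LinearMap.smul_apply, LinearMap.sub_apply, Fop, Eop, Kinv,
      ladderOp_ket, map_smul, if_true, map_zero, smul_zero, Module.End.one_apply, exp_k]
    simp only [Complex.exp_neg]
    match_scalars
    simp
    field_simp
    ring
  · have hn := Complex.exp_ne_zero (h * n)
    have Q := qnum_prod h α hd (n + 1)
    simp only [Module.End.mul_apply, LinearMap.smul_apply, LinearMap.sub_apply, Fop, Eop, Kinv,
      ladderOp_ket, map_smul, Nat.succ_ne_zero, if_false, Nat.add_sub_cancel,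
      Module.End.one_apply, smul_smul]
    rw [← mul_assoc, Q]
    simp only [exp_k, exp_succ]
    simp only [Complex.exp_neg]
    match_scalars
    field_simp
    ring

lemma rel_EF (h α : ℂ) (hd : Complex.exp h - Complex.exp (-h) ≠ 0) :
    (Complex.exp h - Complex.exp (-h)) ^ 2 • ((Kinv h α * Eop h α) * Fop) =
      (Complex.exp (h * α) + Complex.exp (-(h * α))) • Kinv h α
      - (Complex.exp h) • (Kinv h α * Kinv h α) - Complex.exp (-h) • 1 := by
  apply end_ext
  intro n
  have hh := Complex.exp_ne_zero h
  have ha := Complex.exp_ne_zero (h * α)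
  have hn := Complex.exp_ne_zero (h * n)
  have Q := qnum_prod h α hd (n + 1)
  simp only [Module.End.mul_apply, LinearMap.smul_apply, LinearMap.sub_apply, Fop, Eop, Kinv,
    ladderOp_ket, map_smul, Nat.succ_ne_zero, if_false, Nat.add_sub_cancel,
    Module.End.one_apply, smul_smul]
  rw [← mul_assoc, Q]
  simp only [exp_k, exp_succ]
  simp only [Complex.exp_neg]
  match_scalars
  field_simp
  ring

/-- generic K-matrix shape -/
def Kg {A : Type*} [Ring A] [Algebra ℂ A] (k F C : A) (x b f y e : ℂ) :
    Matrix (Fin 2) (Fin 2) A :=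
  !![x • 1 + b • k, f • F; f • C, y • 1 + e • k]

/-- generic R-matrix shape -/
def Rg (x y z t : ℂ) : Matrix (Fin 2 × Fin 2) (Fin 2 × Fin 2) ℂ :=
  Matrix.of fun p r =>
    if p = r then (if p.1 = p.2 then x else y)
    else if p = ((0 : Fin 2), (1 : Fin 2)) ∧ r = ((1 : Fin 2), (0 : Fin 2)) then z
    else if p = ((1 : Fin 2), (0 : Fin 2)) ∧ r = ((0 : Fin 2), (1 : Fin 2)) then t
    else 0

set_option maxHeartbeats 4000000 in
lemma generic {A : Type*} [Ring A] [Algebra ℂ A] (k F C : A) (q a m U V : ℂ)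
    (hq0 : q ≠ 0) (ha0 : a ≠ 0) (hU0 : U ≠ 0) (hV0 : V ≠ 0)
    (x₁ y₁ z₁ t₁ x₂ y₂ z₂ t₂ p₁ b₁ f₁ g₁ e₁ p₂ b₂ f₂ g₂ e₂ c₁ c₂ c₃ c₄ : ℂ)
    (hx₁ : x₁ = (U * V⁻¹ * q - U⁻¹ * V * q⁻¹) / 2)
    (hy₁ : y₁ = (U * V⁻¹ - U⁻¹ * V) / 2)
    (hz₁ : z₁ = (q - q⁻¹) / 2 * (U * V⁻¹))
    (ht₁ : t₁ = (q - q⁻¹) / 2 * (U⁻¹ * V))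
    (hx₂ : x₂ = (U * V * q - U⁻¹ * V⁻¹ * q⁻¹) / 2)
    (hy₂ : y₂ = (U * V - U⁻¹ * V⁻¹) / 2)
    (hz₂ : z₂ = (q - q⁻¹) / 2 * (U * V))
    (ht₂ : t₂ = (q - q⁻¹) / 2 * (U⁻¹ * V⁻¹))
    (hp₁ : p₁ = 1 - m * ((U * a⁻¹ - U⁻¹ * a) * (U - U⁻¹) / 4 + (U ^ 2 - U⁻¹ ^ 2) / 4 * a))
    (hb₁ : b₁ = m * ((U ^ 2 - U⁻¹ ^ 2) / 4) * q⁻¹)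
    (hf₁ : f₁ = -(m * ((U ^ 2 - U⁻¹ ^ 2) / 4)))
    (hg₁ : g₁ = 1 - m * ((U * a⁻¹ - U⁻¹ * a) * (U - U⁻¹) / 4 - (U ^ 2 - U⁻¹ ^ 2) / 4 * a⁻¹))
    (he₁ : e₁ = -(m * ((U ^ 2 - U⁻¹ ^ 2) / 4) * q))
    (hp₂ : p₂ = 1 - m * ((V * a⁻¹ - V⁻¹ * a) * (V - V⁻¹) / 4 + (V ^ 2 - V⁻¹ ^ 2) / 4 * a))
    (hb₂ : b₂ = m * ((V ^ 2 - V⁻¹ ^ 2) / 4) * q⁻¹)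
    (hf₂ : f₂ = -(m * ((V ^ 2 - V⁻¹ ^ 2) / 4)))
    (hg₂ : g₂ = 1 - m * ((V * a⁻¹ - V⁻¹ * a) * (V - V⁻¹) / 4 - (V ^ 2 - V⁻¹ ^ 2) / 4 * a⁻¹))
    (he₂ : e₂ = -(m * ((V ^ 2 - V⁻¹ ^ 2) / 4) * q))
    (hc₁ : c₁ = q⁻¹ ^ 2) (hc₂ : c₂ = q ^ 2) (hc₃ : c₃ = q⁻¹ * (a + a⁻¹))
    (hc₄ : c₄ = q * (a + a⁻¹))
    (hFk : F * k = c₁ • (k * F)) (hCk : C * k = c₂ • (k * C))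
    (hFC : F * C = c₃ • k - c₁ • (k * k) - 1)
    (hCF : C * F = c₄ • k - c₂ • (k * k) - 1) :
    (Matrix.of fun p r => Rg x₁ y₁ z₁ t₁ p r • (1 : A)) *
    (Matrix.of fun p r : Fin 2 × Fin 2 =>
      if p.2 = r.2 then Kg k F C p₁ b₁ f₁ g₁ e₁ p.1 r.1 else 0) *
    (Matrix.of fun p r => Rg x₂ y₂ z₂ t₂ p.swap r.swap • (1 : A)) *
    (Matrix.of fun p r : Fin 2 × Fin 2 =>
      if p.1 = r.1 then Kg k F C p₂ b₂ f₂ g₂ e₂ p.2 r.2 else 0) =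
    (Matrix.of fun p r : Fin 2 × Fin 2 =>
      if p.1 = r.1 then Kg k F C p₂ b₂ f₂ g₂ e₂ p.2 r.2 else 0) *
    (Matrix.of fun p r => Rg x₂ y₂ z₂ t₂ p r • (1 : A)) *
    (Matrix.of fun p r : Fin 2 × Fin 2 =>
      if p.2 = r.2 then Kg k F C p₁ b₁ f₁ g₁ e₁ p.1 r.1 else 0) *
    (Matrix.of fun p r => Rg x₁ y₁ z₁ t₁ p.swap r.swap • (1 : A)) := by
  ext ⟨i, j⟩ ⟨i', j'⟩
  fin_cases i <;> fin_cases j <;> fin_cases i' <;> fin_cases j' <;>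
  (simp [Matrix.mul_apply, Fintype.sum_prod_type, Fin.sum_univ_two, Rg, Kg]
   try simp only [mul_add, add_mul, mul_sub, sub_mul, smul_mul_assoc, mul_smul_comm, one_mul,
     mul_one, hFk, hCk, hFC, hCF, smul_smul, smul_add, smul_sub]
   try match_scalars) <;>
  (clear hFk hCk hFC hCF
   try subst_vars
   try field_simp
   try ring)

lemma Kblob_eq (h α μ u : ℂ) (hD : Complex.exp (h * α) - Complex.exp (-(h * α)) ≠ 0) :
    Kblob h α μ u =
      Kg (Kinv h α) ((Complex.exp h - Complex.exp (-h)) • Fop)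
        ((Complex.exp h * (Complex.exp h - Complex.exp (-h))) • (Kinv h α * Eop h α))
        (1 - μ / (Complex.sinh h * Complex.sinh (h * α)) *
          ((Complex.exp u * (Complex.exp (h * α))⁻¹ - (Complex.exp u)⁻¹ * Complex.exp (h * α)) *
            (Complex.exp u - (Complex.exp u)⁻¹) / 4 +
            (Complex.exp u ^ 2 - (Complex.exp u)⁻¹ ^ 2) / 4 * Complex.exp (h * α)))
        (μ / (Complex.sinh h * Complex.sinh (h * α)) *
          ((Complex.exp u ^ 2 - (Complex.exp u)⁻¹ ^ 2) / 4) * (Complex.exp h)⁻¹)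
        (-(μ / (Complex.sinh h * Complex.sinh (h * α)) *
          ((Complex.exp u ^ 2 - (Complex.exp u)⁻¹ ^ 2) / 4)))
        (1 - μ / (Complex.sinh h * Complex.sinh (h * α)) *
          ((Complex.exp u * (Complex.exp (h * α))⁻¹ - (Complex.exp u)⁻¹ * Complex.exp (h * α)) *
            (Complex.exp u - (Complex.exp u)⁻¹) / 4 -
            (Complex.exp u ^ 2 - (Complex.exp u)⁻¹ ^ 2) / 4 * (Complex.exp (h * α))⁻¹))
        (-(μ / (Complex.sinh h * Complex.sinh (h * α)) *
          ((Complex.exp u ^ 2 - (Complex.exp u)⁻¹ ^ 2) / 4) * Complex.exp h)) := by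
  have h1 : Complex.sinh (u - h * α) * Complex.sinh u =
      (Complex.exp u * (Complex.exp (h * α))⁻¹ - (Complex.exp u)⁻¹ * Complex.exp (h * α)) *
            (Complex.exp u - (Complex.exp u)⁻¹) / 4 := by
    rw [Complex.sinh, Complex.sinh, neg_sub, Complex.exp_sub, Complex.exp_sub, Complex.exp_neg]
    ring
  have h2 : Complex.sinh (h * α) * Complex.sinh (2 * u) *
      (Complex.exp (h * α) - Complex.exp (-(h * α)))⁻¹ =
      (Complex.exp u ^ 2 - (Complex.exp u)⁻¹ ^ 2) / 4 := by
    have e : Complex.exp u ^ 2 - (Complex.exp u)⁻¹ ^ 2 = 2 * Complex.sinh (2 * u) := by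
      rw [Complex.sinh, ← Complex.exp_neg, ← Complex.exp_nat_mul, ← Complex.exp_nat_mul]
      push_cast
      rw [mul_neg]
      ring
    rw [e, Complex.sinh.eq_1 (h * α)]
    field_simp
    ring
  unfold Kblob bPlus
  rw [h1, smul_smul, h2]
  generalize μ / (Complex.sinh h * Complex.sinh (h * α)) = m
  rw [Complex.exp_neg h, Complex.exp_neg (h * α)]
  generalize (Complex.exp u ^ 2 - (Complex.exp u)⁻¹ ^ 2) / 4 = s
  generalize (Complex.exp u * (Complex.exp (h * α))⁻¹ - (Complex.exp u)⁻¹ * Complex.exp (h * α)) *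
            (Complex.exp u - (Complex.exp u)⁻¹) / 4 = t
  ext1 i j
  fin_cases i <;> fin_cases j <;> simp [Kg] <;> module

lemma Rsc_eq (h w : ℂ) : Rsc h w = Rg (Complex.sinh (w + h)) (Complex.sinh w)
    (Complex.sinh h * Complex.exp w) (Complex.sinh h * Complex.exp (-w)) := rfl

set_option maxHeartbeats 400000 in
lemma reflection_aux (h α μ : ℂ) (hq : Complex.exp h ^ 2 ≠ 1)
    (hα : Complex.exp (h * α) ≠ Complex.exp (-(h * α))) :
    ∀ u v : ℂ,
      Rab h (u - v) * Ka h α μ u * Rba h (u + v) * Kb h α μ v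
        = Kb h α μ v * Rab h (u + v) * Ka h α μ u * Rba h (u - v) := by
  intro u v
  have hD : Complex.exp (h * α) - Complex.exp (-(h * α)) ≠ 0 := sub_ne_zero.mpr hα
  have hq0 := Complex.exp_ne_zero h
  have hd : Complex.exp h - Complex.exp (-h) ≠ 0 := by
    intro H
    apply hq
    rw [Complex.exp_neg] at H
    field_simp at H
    linear_combination H
  unfold Rab Rba Ka Kb
  simp only [Kblob_eq h α μ _ hD, Rsc_eq]
  have hFE := rel_FE h α hd
  have hEF := rel_EF h α hd
  have hFK := rel_FK h α
  have hEK := rel_EK h α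
  have hw := Complex.exp_ne_zero u
  have hv := Complex.exp_ne_zero v
  have s1 : Complex.sinh (u - v + h) = (Complex.exp u * (Complex.exp v)⁻¹ * Complex.exp h -
      (Complex.exp u)⁻¹ * Complex.exp v * (Complex.exp h)⁻¹) / 2 := by
    simp only [Complex.sinh, Complex.exp_neg, Complex.exp_add, Complex.exp_sub]
    field_simp
  have s2 : Complex.sinh (u - v) = (Complex.exp u * (Complex.exp v)⁻¹ -
      (Complex.exp u)⁻¹ * Complex.exp v) / 2 := by
    simp only [Complex.sinh, Complex.exp_neg, Complex.exp_sub]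
    field_simp
  have s3 : Complex.sinh h * Complex.exp (u - v) =
      (Complex.exp h - (Complex.exp h)⁻¹) / 2 * (Complex.exp u * (Complex.exp v)⁻¹) := by
    simp only [Complex.sinh, Complex.exp_neg, Complex.exp_sub]
    field_simp
  have s4 : Complex.sinh h * Complex.exp (-(u - v)) =
      (Complex.exp h - (Complex.exp h)⁻¹) / 2 * ((Complex.exp u)⁻¹ * Complex.exp v) := by
    simp only [Complex.sinh, Complex.exp_neg, Complex.exp_sub]
    field_simp
  have s5 : Complex.sinh (u + v + h) = (Complex.exp u * Complex.exp v * Complex.exp h -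
      (Complex.exp u)⁻¹ * (Complex.exp v)⁻¹ * (Complex.exp h)⁻¹) / 2 := by
    simp only [Complex.sinh, Complex.exp_neg, Complex.exp_add]
    field_simp
  have s6 : Complex.sinh (u + v) = (Complex.exp u * Complex.exp v -
      (Complex.exp u)⁻¹ * (Complex.exp v)⁻¹) / 2 := by
    simp only [Complex.sinh, Complex.exp_neg, Complex.exp_add]
    field_simp
  have s7 : Complex.sinh h * Complex.exp (u + v) =
      (Complex.exp h - (Complex.exp h)⁻¹) / 2 * (Complex.exp u * Complex.exp v) := by
    simp only [Complex.sinh, Complex.exp_neg, Complex.exp_add]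
  have s8 : Complex.sinh h * Complex.exp (-(u + v)) =
      (Complex.exp h - (Complex.exp h)⁻¹) / 2 * ((Complex.exp u)⁻¹ * (Complex.exp v)⁻¹) := by
    simp only [Complex.sinh, Complex.exp_neg, Complex.exp_add]
    field_simp
  have r1 : ((Complex.exp h - Complex.exp (-h)) • Fop) * Kinv h α = ((Complex.exp h)⁻¹ ^ 2) •
      (Kinv h α * ((Complex.exp h - Complex.exp (-h)) • Fop)) := by
    rw [smul_mul_assoc, hFK, mul_smul_comm, ← Complex.exp_neg, smul_comm]
  have r2 : ((Complex.exp h * (Complex.exp h - Complex.exp (-h))) • (Kinv h α * Eop h α)) *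
      Kinv h α = (Complex.exp h ^ 2) • (Kinv h α *
      ((Complex.exp h * (Complex.exp h - Complex.exp (-h))) • (Kinv h α * Eop h α))) := by
    rw [smul_mul_assoc, mul_assoc, hEK, mul_smul_comm, mul_smul_comm, smul_comm]
  have r3 : ((Complex.exp h - Complex.exp (-h)) • Fop) *
      ((Complex.exp h * (Complex.exp h - Complex.exp (-h))) • (Kinv h α * Eop h α)) =
      ((Complex.exp h)⁻¹ * (Complex.exp (h * α) + (Complex.exp (h * α))⁻¹)) • Kinv h α -
      ((Complex.exp h)⁻¹ ^ 2) • (Kinv h α * Kinv h α) - 1 := by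
    rw [smul_mul_smul_comm, show ∀ d q : ℂ, d * (q * d) = q * d ^ 2 by intros; ring, mul_smul,
      hFE, Complex.exp_neg, Complex.exp_neg]
    match_scalars <;> field_simp
  have r4 : ((Complex.exp h * (Complex.exp h - Complex.exp (-h))) • (Kinv h α * Eop h α)) *
      ((Complex.exp h - Complex.exp (-h)) • Fop) =
      (Complex.exp h * (Complex.exp (h * α) + (Complex.exp (h * α))⁻¹)) • Kinv h α -
      (Complex.exp h ^ 2) • (Kinv h α * Kinv h α) - 1 := by
    rw [smul_mul_smul_comm, show ∀ d q : ℂ, (q * d) * d = q * d ^ 2 by intros; ring, mul_smul,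
      hEF, Complex.exp_neg, Complex.exp_neg]
    match_scalars <;> field_simp
  have key := generic (Kinv h α) ((Complex.exp h - Complex.exp (-h)) • Fop)
    ((Complex.exp h * (Complex.exp h - Complex.exp (-h))) • (Kinv h α * Eop h α))
    (Complex.exp h) (Complex.exp (h * α)) (μ / (Complex.sinh h * Complex.sinh (h * α)))
    (Complex.exp u) (Complex.exp v)
    hq0 (Complex.exp_ne_zero _) (Complex.exp_ne_zero _) (Complex.exp_ne_zero _)
    _ _ _ _ _ _ _ _ _ _ _ _ _ _ _ _ _ _ _ _ _ _
    s1 s2 s3 s4 s5 s6 s7 s8 rfl rfl rfl rfl rfl rfl rfl rfl rfl rfl rfl rfl rfl rfl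
    r1 r2 r3 r4
  exact key

/-- The blob K-matrix solves the boundary Yang–Baxter (reflection) equation on
`ℂ²_a ⊗ ℂ²_b ⊗ V_α`. -/
theorem blob_K_matrix_reflection_equation (h α μ : ℂ) (hq : Complex.exp h ^ 2 ≠ 1)
    (hα : Complex.exp (h * α) ≠ Complex.exp (-(h * α))) :
    ∀ u v : ℂ,
      Rab h (u - v) * Ka h α μ u * Rba h (u + v) * Kb h α μ v
        = Kb h α μ v * Rab h (u + v) * Ka h α μ u * Rba h (u - v) := by
  exact reflection_aux h α μ hq hα
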